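/- arXiv:1302.2851 — 3 statements merged into one kernel-verified Lean document; each statement's English description precedes it below -/
import Mathlib

section
/- The series $\sum_{k \geq 1} Z_k \left(\frac{2}{9}\right)^k$ converges and its sum equals $\frac{1}{3}$. -/
open Filter Topology

/-- `Z_p = 2 (2/3)^p (3p-3)!/(p!(2p-1)!)`. -/
noncomputable def Zp (p : ℕ) : ℝ :=
  2 * (2 / 3) ^ p *
    ((Nat.factorial (3 * p - 3) : ℝ) / ((Nat.factorial p : ℝ) * (Nat.factorial (2 * p - 1) : ℝ)))

/-!
Up to the factor `2/3`, the series is the tail (without the initial `1`) of the hypergeometric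
series `₂F₁(-2/3, -1/3; 1/2; 1)`, so the claim is the instance `₂F₁(-2/3, -1/3; 1/2; 1) = 3/2` of
Gauss's summation theorem. The proof is Gauss's own. Writing `S(C) = ₂F₁(-2/3, -1/3; C; 1)`,

* a telescoping identity gives `C (C + 1) S(C) = (C + 2/3) (C + 1/3) S(C + 1)` (`gaussSum_step`);
* the bound `k² gaussTerm C k ≤ 2/(9C)` for `C ≥ 1/2`, `k ≥ 1` gives summability and `S(C) → 1` as `C → ∞`;
* iterating from `C = 1/2`, `S(1/2)` is the limit of
  `∏ (1 - (1/6)²/(j+1)²) / ∏ (1 - (1/2)²/(j+1)²)`, which Euler's sine product evaluates to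
  `3/2`.
-/

/-- The `k`-th term `(-2/3)_k (-1/3)_k / ((C)_k k!)` of `₂F₁(-2/3, -1/3; C; 1)`, defined through
the ratio of consecutive terms. -/
noncomputable def gaussTerm (C : ℝ) : ℕ → ℝ
  | 0 => 1
  | k + 1 => gaussTerm C k * (((k : ℝ) - 2 / 3) * ((k : ℝ) - 1 / 3) / ((C + k) * (k + 1)))

lemma gaussTerm_pos {C : ℝ} (hC : 0 < C) (k : ℕ) : 0 < gaussTerm C k := by
  induction k with
  | zero => simp [gaussTerm]
  | succ k ih =>
    rw [gaussTerm]
    -- no integer lies between `1/3` and `2/3`, so the two factors have the same sign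
    have h : 0 < ((k : ℝ) - 2 / 3) * ((k : ℝ) - 1 / 3) := by
      rcases k with _ | k
      · norm_num
      · push_cast
        have : (0 : ℝ) ≤ k := k.cast_nonneg
        apply mul_pos <;> linarith
    positivity

lemma gaussTerm_shift {C : ℝ} (hC : 0 < C) (k : ℕ) :
    gaussTerm (C + 1) k = gaussTerm C k * (C / (C + k)) := by
  induction k with
  | zero => simp [gaussTerm, hC.ne']
  | succ k ih =>
    rw [gaussTerm, gaussTerm, ih]
    have h1 : C + k ≠ 0 := by positivity
    have h2 : C + 1 + k ≠ 0 := by positivity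
    have h3 : C + (k + 1) ≠ 0 := by positivity
    have h4 : (k : ℝ) + 1 ≠ 0 := by positivity
    push_cast
    field_simp
    ring

/-- Finite form of the contiguity relation: the differences of the two sides telescope. -/
lemma gaussTerm_telescope {C : ℝ} (hC : 0 < C) (N : ℕ) :
    C * (C + 1) * ∑ k ∈ Finset.range N, gaussTerm C k
      - (C + 2 / 3) * (C + 1 / 3) * ∑ k ∈ Finset.range N, gaussTerm (C + 1) k
      = -C * (N * gaussTerm C N) := by
  induction N with
  | zero => simp
  | succ N ih =>
    rw [Finset.sum_range_succ, Finset.sum_range_succ, mul_add (C * (C + 1)),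
      mul_add ((C + 2 / 3) * (C + 1 / 3)), add_sub_add_comm, ih,
      gaussTerm_shift hC, gaussTerm]
    have h1 : C + N ≠ 0 := by positivity
    have h4 : (N : ℝ) + 1 ≠ 0 := by positivity
    push_cast
    field_simp
    ring

/-- For `C ≥ 1/2` the quantity `k² gaussTerm C k` is nonincreasing in `k ≥ 1`, with initial value
`2/(9C)`. -/
lemma gaussTerm_bound {C : ℝ} (hC : 1 / 2 ≤ C) (k : ℕ) :
    gaussTerm C (k + 1) ≤ 2 / 9 / C * (1 / ((k : ℝ) + 1) ^ 2) := by
  have hC0 : 0 < C := by linarith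
  induction k with
  | zero =>
    simp only [gaussTerm]
    apply le_of_eq
    push_cast
    field_simp
    ring
  | succ k ih =>
    rw [gaussTerm]
    have hk : (0 : ℝ) ≤ k := k.cast_nonneg
    push_cast
    have hr : ((k : ℝ) + 1 - 2 / 3) * ((k : ℝ) + 1 - 1 / 3) / ((C + (k + 1)) * (k + 1 + 1))
        ≤ ((k : ℝ) + 1) ^ 2 / ((k : ℝ) + 1 + 1) ^ 2 := by
      rw [div_le_div_iff₀ (by positivity) (by positivity)]
      have h : ((k : ℝ) + 1 - 2 / 3) * ((k : ℝ) + 1 - 1 / 3) * ((k : ℝ) + 1 + 1)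
          ≤ ((k : ℝ) + 1) ^ 2 * (C + (k + 1)) := by
        nlinarith [mul_le_mul_of_nonneg_left hC (sq_nonneg ((k : ℝ) + 1)), mul_nonneg hk hk]
      nlinarith [mul_le_mul_of_nonneg_right h (by positivity : (0 : ℝ) ≤ (k : ℝ) + 1 + 1)]
    have hn : 0 ≤ ((k : ℝ) + 1 - 2 / 3) * ((k : ℝ) + 1 - 1 / 3) / ((C + (k + 1)) * (k + 1 + 1)) :=
      div_nonneg (mul_nonneg (by linarith) (by linarith)) (by positivity)
    calc _ ≤ 2 / 9 / C * (1 / ((k : ℝ) + 1) ^ 2) * (((k : ℝ) + 1) ^ 2 / ((k : ℝ) + 1 + 1) ^ 2) :=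
          mul_le_mul ih hr hn (by positivity)
      _ = _ := by field_simp

lemma summable_inv_succ_sq : Summable (fun k : ℕ => 1 / ((k : ℝ) + 1) ^ 2) := by
  have := (summable_nat_add_iff 1).2 (Real.summable_one_div_nat_pow.2 (one_lt_two : 1 < 2))
  simpa using this

lemma gaussTerm_summable_tail {C : ℝ} (hC : 1 / 2 ≤ C) :
    Summable (fun k => gaussTerm C (k + 1)) :=
  Summable.of_nonneg_of_le (fun k => (gaussTerm_pos (by linarith) _).le) (gaussTerm_bound hC)
    (summable_inv_succ_sq.mul_left _)

lemma gaussTerm_summable {C : ℝ} (hC : 1 / 2 ≤ C) : Summable (gaussTerm C) :=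
  (summable_nat_add_iff 1).1 (gaussTerm_summable_tail hC)

lemma tendsto_mul_gaussTerm {C : ℝ} (hC : 1 / 2 ≤ C) :
    Tendsto (fun N : ℕ => (N : ℝ) * gaussTerm C N) atTop (𝓝 0) := by
  have hC0 : 0 < C := by linarith
  rw [← tendsto_add_atTop_iff_nat 1]
  have hlim : Tendsto (fun N : ℕ => 2 / 9 / C * (1 / ((N : ℝ) + 1))) atTop (𝓝 0) := by
    simpa using (tendsto_one_div_add_atTop_nhds_zero_nat (𝕜 := ℝ)).const_mul (2 / 9 / C)
  refine squeeze_zero (fun N => ?_) (fun N => ?_) hlim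
  · exact mul_nonneg (Nat.cast_nonneg _) (gaussTerm_pos hC0 _).le
  · calc ((N + 1 : ℕ) : ℝ) * gaussTerm C (N + 1)
        ≤ ((N + 1 : ℕ) : ℝ) * (2 / 9 / C * (1 / ((N : ℝ) + 1) ^ 2)) :=
          mul_le_mul_of_nonneg_left (gaussTerm_bound hC N) (Nat.cast_nonneg _)
      _ = 2 / 9 / C * (1 / ((N : ℝ) + 1)) := by
          push_cast
          field_simp

lemma gaussSum_step {C : ℝ} (hC : 1 / 2 ≤ C) :
    C * (C + 1) * ∑' k, gaussTerm C k = (C + 2 / 3) * (C + 1 / 3) * ∑' k, gaussTerm (C + 1) k := by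
  have h1 := ((gaussTerm_summable hC).hasSum.tendsto_sum_nat).const_mul (C * (C + 1))
  have h2 := ((gaussTerm_summable (C := C + 1) (by linarith)).hasSum.tendsto_sum_nat).const_mul
    ((C + 2 / 3) * (C + 1 / 3))
  have h3 := (tendsto_mul_gaussTerm hC).const_mul (-C)
  have h4 := h1.sub h2
  simp only [gaussTerm_telescope (show 0 < C by linarith)] at h4
  have := tendsto_nhds_unique h4 h3
  linarith

lemma gaussSum_iterate (n : ℕ) :
    (∏ j ∈ Finset.range n, (1 - (1 / 2 : ℝ) ^ 2 / ((j : ℝ) + 1) ^ 2)) * ∑' k, gaussTerm (1 / 2) k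
      = (∏ j ∈ Finset.range n, (1 - (1 / 6 : ℝ) ^ 2 / ((j : ℝ) + 1) ^ 2))
        * ∑' k, gaussTerm (1 / 2 + n) k := by
  induction n with
  | zero => simp
  | succ n ih =>
    have hn : (0 : ℝ) ≤ n := n.cast_nonneg
    have hs := gaussSum_step (C := 1 / 2 + n) (by linarith)
    have e1 : (1 - (1 / 2 : ℝ) ^ 2 / ((n : ℝ) + 1) ^ 2)
        = (1 / 2 + n) * (1 / 2 + n + 1) / ((n : ℝ) + 1) ^ 2 := by
      field_simp
      ring
    have e2 : (1 - (1 / 6 : ℝ) ^ 2 / ((n : ℝ) + 1) ^ 2)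
        = (1 / 2 + n + 2 / 3) * (1 / 2 + n + 1 / 3) / ((n : ℝ) + 1) ^ 2 := by
      field_simp
      ring
    rw [Finset.prod_range_succ, Finset.prod_range_succ, mul_right_comm, ih, mul_assoc, mul_assoc,
      e1, e2]
    congr 1
    push_cast
    rw [← add_assoc, mul_comm, div_mul_eq_mul_div, div_mul_eq_mul_div, hs]

lemma tendsto_gaussSum :
    Tendsto (fun n : ℕ => ∑' k, gaussTerm (1 / 2 + n) k) atTop (𝓝 1) := by
  set M := ∑' k : ℕ, 1 / ((k : ℝ) + 1) ^ 2
  have hlim : Tendsto (fun n : ℕ => 1 + 2 / 9 / (1 / 2 + (n : ℝ)) * M) atTop (𝓝 1) := by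
    have h : Tendsto (fun n : ℕ => 1 / 2 + (n : ℝ)) atTop atTop :=
      tendsto_atTop_add_const_left _ _ tendsto_natCast_atTop_atTop
    simpa using ((h.const_div_atTop (2 / 9)).mul_const M).const_add 1
  have hC (n : ℕ) : (1 / 2 : ℝ) ≤ 1 / 2 + n := by
    have : (0 : ℝ) ≤ n := n.cast_nonneg
    linarith
  have hsplit (n : ℕ) : ∑' k, gaussTerm (1 / 2 + n) k
      = 1 + ∑' k, gaussTerm (1 / 2 + n) (k + 1) := by
    rw [(gaussTerm_summable (hC n)).tsum_eq_zero_add, gaussTerm]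
  refine tendsto_of_tendsto_of_tendsto_of_le_of_le tendsto_const_nhds hlim (fun n => ?_)
    (fun n => ?_)
  · simp only [hsplit]
    have : 0 ≤ ∑' k, gaussTerm (1 / 2 + n) (k + 1) :=
      tsum_nonneg fun k => (gaussTerm_pos (by linarith [hC n]) _).le
    linarith
  · simp only [hsplit]
    have h := (gaussTerm_summable_tail (hC n)).tsum_le_tsum (gaussTerm_bound (hC n))
      (summable_inv_succ_sq.mul_left _)
    rw [tsum_mul_left] at h
    linarith

lemma gaussSum_half : ∑' k, gaussTerm (1 / 2) k = 3 / 2 := by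
  have h2 := (Real.tendsto_euler_sin_prod (1 / 2)).mul_const (∑' k, gaussTerm (1 / 2) k)
  have h6 := (Real.tendsto_euler_sin_prod (1 / 6)).mul tendsto_gaussSum
  have h := h6.const_mul 3
  have e : (fun n : ℕ => 3 * (Real.pi * (1 / 6)
      * (∏ j ∈ Finset.range n, (1 - (1 / 6 : ℝ) ^ 2 / ((j : ℝ) + 1) ^ 2))
        * ∑' k, gaussTerm (1 / 2 + n) k))
      = fun n : ℕ => Real.pi * (1 / 2)
      * (∏ j ∈ Finset.range n, (1 - (1 / 2 : ℝ) ^ 2 / ((j : ℝ) + 1) ^ 2))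
        * ∑' k, gaussTerm (1 / 2) k := by
    funext n
    linear_combination (-(Real.pi / 2)) * gaussSum_iterate n
  rw [e] at h
  have := tendsto_nhds_unique h2 h
  rw [mul_one_div, mul_one_div, Real.sin_pi_div_two, Real.sin_pi_div_six] at this
  linarith

lemma Zp_term_eq (k : ℕ) :
    Zp (k + 1) * (2 / 9 : ℝ) ^ (k + 1) = 2 / 3 * gaussTerm (1 / 2) (k + 1) := by
  induction k with
  | zero => norm_num [Zp, gaussTerm, Nat.factorial]
  | succ k ih =>
    rw [gaussTerm, ← mul_assoc, ← ih]
    unfold Zp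
    rw [show 3 * (k + 1 + 1) - 3 = 3 * k + 1 + 1 + 1 by omega,
      show 2 * (k + 1 + 1) - 1 = 2 * k + 1 + 1 + 1 by omega,
      show 3 * (k + 1) - 3 = 3 * k by omega, show 2 * (k + 1) - 1 = 2 * k + 1 by omega]
    simp only [Nat.factorial_succ (3 * k + 1 + 1), Nat.factorial_succ (3 * k + 1),
      Nat.factorial_succ (3 * k), Nat.factorial_succ (2 * k + 1 + 1),
      Nat.factorial_succ (2 * k + 1), Nat.factorial_succ (k + 1), pow_succ _ (k + 1)]
    have h1 : ((k + 1).factorial : ℝ) ≠ 0 := by positivity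
    have h2 : ((2 * k + 1).factorial : ℝ) ≠ 0 := by positivity
    have h3 : (1 / 2 : ℝ) + (k + 1) ≠ 0 := by positivity
    push_cast
    field_simp
    ring

/-- The series `∑_{k ≥ 1} Z_k (2/9)^k` converges with sum `1/3`. -/
theorem Zp_series_sum :
    HasSum (fun k : ℕ => Zp (k + 1) * (2 / 9 : ℝ) ^ (k + 1)) (1 / 3 : ℝ) := by
  simp only [Zp_term_eq]
  have hs := gaussTerm_summable (le_refl (1 / 2 : ℝ))
  have h := hs.tsum_eq_zero_add
  rw [gaussSum_half, gaussTerm] at h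
  have hv : ∑' k, gaussTerm (1 / 2) (k + 1) = 1 / 2 := by linarith
  have h' := (gaussTerm_summable_tail (le_refl (1 / 2 : ℝ))).hasSum.mul_left (2 / 3)
  rw [hv] at h'
  norm_num at h' ⊢
  exact h'
end

section
/- The series $\sum_{k \geq 1} k \, Z_k \left(\frac{2}{9}\right)^{k-1}$ converges and its sum equals $2$. -/
/-!
After cancelling factorials, the `k`-th term is `(4/3) * c k * (4/27)^k`, where
`c k = (3k)! / (k! (2k+1)!)` are the Fuss–Catalan numbers counting ternary trees. Everything
therefore reduces to `∑ c k * (4/27)^k = 3/2`, the value at the boundary of the disc of convergence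
of the generating function `T` satisfying `T = 1 + X * T ^ 3`.

A formal solution `T` of the cubic is the `X`-adic limit of the polynomials
`P 0 = 0`, `P (m + 1) = 1 + X * P m ^ 3`. Differentiating the cubic twice shows that `T` solves a
linear second-order differential equation (`ternary_ode`), whose coefficientwise form is the
two-term recurrence of `c`; hence `T` has coefficients `c` (`coeff_eq_fuss`).

For convergence at `4/27`: the `P m` have nonnegative coefficients, and `P m (4/27) ≤ 3/2` by
induction because `1 + (4/27) * (3/2)^3 = 3/2`. Since `P N` agrees with `T` below degree `N`, the
partial sums of the series are bounded by `3/2`. Its sum `S` then satisfies `S = 1 + (4/27) * S ^ 3`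
by Cauchy products, i.e. `(2 * S - 3)^2 * (S + 3) = 0`, and `S ≥ 0` forces `S = 3/2`.
-/

open Filter Topology

/-- The Picard iterates, starting at `0`, of the equation `T = 1 + X * T ^ 3`. -/
noncomputable def ternaryApprox : ℕ → Polynomial ℝ
  | 0 => 0
  | m + 1 => 1 + Polynomial.X * ternaryApprox m ^ 3

/-- The generating function of ternary trees: the `X`-adic limit of `ternaryApprox`, whose `n`-th
coefficient is already attained at step `n + 1`. -/
noncomputable def ternarySeries : PowerSeries ℝ :=
  PowerSeries.mk fun n => (ternaryApprox (n + 1)).coeff n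

/-- The Fuss–Catalan numbers `(3n)! / (n! (2n+1)!)`. -/
noncomputable def fuss (n : ℕ) : ℝ :=
  (Nat.factorial (3 * n) : ℝ) / ((Nat.factorial n : ℝ) * (Nat.factorial (2 * n + 1) : ℝ))

lemma X_pow_dvd_approx_step (m : ℕ) :
    (Polynomial.X : Polynomial ℝ) ^ m ∣ ternaryApprox (m + 1) - ternaryApprox m := by
  induction m with
  | zero => simp
  | succ m ih =>
    have h : ternaryApprox (m + 1 + 1) - ternaryApprox (m + 1)
        = Polynomial.X * (ternaryApprox (m + 1) ^ 3 - ternaryApprox m ^ 3) := by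
      rw [ternaryApprox.eq_2 (m + 1), ternaryApprox.eq_2 m]
      ring
    rw [h, pow_succ']
    exact mul_dvd_mul_left _ (ih.trans (sub_dvd_pow_sub_pow _ _ 3))

lemma approx_coeff_stable (n d : ℕ) :
    (ternaryApprox (n + 1 + d)).coeff n = (ternaryApprox (n + 1)).coeff n := by
  induction d with
  | zero => rfl
  | succ d ih =>
    rw [← ih, ← sub_eq_zero, ← Polynomial.coeff_sub]
    exact Polynomial.X_pow_dvd_iff.1 (X_pow_dvd_approx_step (n + 1 + d)) n (by omega)

lemma coeff_ternarySeries {n N : ℕ} (h : n < N) :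
    PowerSeries.coeff n ternarySeries = (ternaryApprox N).coeff n := by
  obtain ⟨d, rfl⟩ := Nat.exists_eq_add_of_le (Nat.succ_le_of_lt h)
  rw [ternarySeries, PowerSeries.coeff_mk]
  exact (approx_coeff_stable n d).symm

lemma ternarySeries_eq :
    ternarySeries = 1 + PowerSeries.X * ternarySeries ^ 3 := by
  have key (m : ℕ) : (PowerSeries.X : PowerSeries ℝ) ^ m ∣
      ternarySeries - (ternaryApprox m : PowerSeries ℝ) := by
    rw [PowerSeries.X_pow_dvd_iff]
    intro n hn
    rw [map_sub, Polynomial.coeff_coe, coeff_ternarySeries hn, sub_self]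
  have step (m : ℕ) : ((ternaryApprox (m + 1) : Polynomial ℝ) : PowerSeries ℝ)
      = 1 + PowerSeries.X * (ternaryApprox m : PowerSeries ℝ) ^ 3 := by
    rw [ternaryApprox.eq_2]
    simp
  ext n
  rw [← sub_eq_zero, ← map_sub]
  refine PowerSeries.X_pow_dvd_iff.1 ?_ n (Nat.lt_succ_self n)
  have h : ternarySeries - (1 + PowerSeries.X * ternarySeries ^ 3)
      = (ternarySeries - (ternaryApprox (n + 1) : PowerSeries ℝ))
        - PowerSeries.X * (ternarySeries ^ 3 - (ternaryApprox n : PowerSeries ℝ) ^ 3) := by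
    rw [step]
    ring
  rw [h]
  refine dvd_sub (key (n + 1)) ?_
  rw [pow_succ']
  exact mul_dvd_mul_left _ ((key n).trans (sub_dvd_pow_sub_pow _ _ 3))

open PowerSeries in
/-- The hypergeometric equation
`(4 X - 27 X²) D²T + (6 - 54 X) DT - 6 T = 0`, with `D = d/dX`, satisfied by any solution of the cubic. -/
lemma ternary_ode {T : PowerSeries ℝ} (h : T = 1 + X * T ^ 3) :
    (4 * X - 27 * X ^ 2) * d⁄dX ℝ (d⁄dX ℝ T) + (6 - 54 * X) * d⁄dX ℝ T - 6 * T = 0 := by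
  have h1 : d⁄dX ℝ T = T ^ 3 + X * (3 * T ^ 2 * d⁄dX ℝ T) := by
    have hd := congrArg (d⁄dX ℝ) h
    simp only [map_add, Derivation.leibniz, Derivation.leibniz_pow, derivative_X,
      derivative_one, smul_eq_mul, nsmul_eq_mul] at hd
    push_cast at hd
    linear_combination hd
  have h2 : d⁄dX ℝ (d⁄dX ℝ T) = 6 * T ^ 2 * d⁄dX ℝ T
      + 6 * X * T * (d⁄dX ℝ T) ^ 2 + 3 * X * T ^ 2 * d⁄dX ℝ (d⁄dX ℝ T) := by
    have h3 : d⁄dX ℝ (3 : PowerSeries ℝ) = 0 := by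
      rw [← map_ofNat (C (R := ℝ)) 3, derivative_C]
    have hd := congrArg (d⁄dX ℝ) h1
    simp only [map_add, Derivation.leibniz, Derivation.leibniz_pow, derivative_X, h3,
      smul_eq_mul, nsmul_eq_mul] at hd
    push_cast at hd
    linear_combination hd
  generalize d⁄dX ℝ (d⁄dX ℝ T) = Q at h2 ⊢
  generalize d⁄dX ℝ T = P at h1 h2 ⊢
  -- The separant of the cubic; it has constant coefficient `1`.
  have hD : (1 - 3 * X * T ^ 2 : PowerSeries ℝ) ≠ 0 := by
    intro h0
    have := congrArg constantCoeff h0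
    simp at this
  refine (mul_eq_zero.1 ?_).resolve_left (pow_ne_zero 3 hD)
  linear_combination
    (4 * X - 27 * X ^ 2) * ((1 - 3 * X * T ^ 2) ^ 2 * h2
      + (6 * T ^ 2 * (1 - 3 * X * T ^ 2) + 6 * X * T * ((1 - 3 * X * T ^ 2) * P + T ^ 3)) * h1)
    + (6 - 54 * X) * (1 - 3 * X * T ^ 2) ^ 2 * h1
    + 6 * T * (T * (1 - X * T ^ 2) + 1) * h

open PowerSeries in
lemma coeff_recurrence {T : PowerSeries ℝ} (h : T = 1 + X * T ^ 3) (n : ℕ) :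
    (2 * n + 3) * (2 * n + 2) * coeff (n + 1) T
      = 3 * (3 * n + 2) * (3 * n + 1) * coeff n T := by
  have h0 := ternary_ode h
  have h1 : (C (4 : ℝ)) * (X * d⁄dX ℝ (d⁄dX ℝ T)) - C (27 : ℝ) * (X * (X * d⁄dX ℝ (d⁄dX ℝ T)))
      + C (6 : ℝ) * d⁄dX ℝ T - C (54 : ℝ) * (X * d⁄dX ℝ T) - C (6 : ℝ) * T = 0 := by
    simp only [map_ofNat]
    linear_combination h0
  have h2 := congrArg (coeff n) h1
  simp only [map_add, map_sub, coeff_C_mul, map_zero] at h2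
  rcases n with _ | _ | n
  · simp [coeff_derivative] at h2 ⊢
    linarith
  · simp only [coeff_succ_X_mul, coeff_zero_X_mul, coeff_derivative] at h2
    push_cast at h2 ⊢
    linear_combination h2
  · simp only [coeff_succ_X_mul, coeff_derivative] at h2
    push_cast at h2 ⊢
    linear_combination h2

lemma fuss_recurrence (n : ℕ) :
    (2 * n + 3 : ℝ) * (2 * n + 2) * fuss (n + 1) = 3 * (3 * n + 2) * (3 * n + 1) * fuss n := by
  unfold fuss
  rw [show 3 * (n + 1) = 3 * n + 1 + 1 + 1 by ring, show 2 * (n + 1) + 1 = 2 * n + 1 + 1 + 1 by ring]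
  simp only [Nat.factorial_succ (3 * n + 1 + 1), Nat.factorial_succ (3 * n + 1),
    Nat.factorial_succ (3 * n), Nat.factorial_succ n, Nat.factorial_succ (2 * n + 1 + 1),
    Nat.factorial_succ (2 * n + 1)]
  have a := Nat.factorial_ne_zero n
  have b := Nat.factorial_ne_zero (2 * n + 1)
  push_cast
  field_simp
  ring

lemma coeff_eq_fuss (n : ℕ) : PowerSeries.coeff n ternarySeries = fuss n := by
  induction n with
  | zero =>
    rw [ternarySeries_eq]
    simp [fuss]
  | succ n ih =>
    have h : (2 * n + 3 : ℝ) * (2 * n + 2) ≠ 0 := by positivity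
    apply mul_left_cancel₀ h
    rw [coeff_recurrence ternarySeries_eq, fuss_recurrence, ih]

lemma fuss_nonneg (n : ℕ) : 0 ≤ fuss n := by
  unfold fuss
  positivity

lemma approx_coeff_nonneg (m n : ℕ) : 0 ≤ (ternaryApprox m).coeff n := by
  induction m generalizing n with
  | zero => simp [ternaryApprox]
  | succ m ih =>
    have coeff_mul_nonneg (p q : Polynomial ℝ) (hp : ∀ n, 0 ≤ p.coeff n) (hq : ∀ n, 0 ≤ q.coeff n)
        (n : ℕ) : 0 ≤ (p * q).coeff n := by
      rw [Polynomial.coeff_mul]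
      exact Finset.sum_nonneg fun i _ => mul_nonneg (hp _) (hq _)
    have h3 : ∀ n, 0 ≤ (ternaryApprox m ^ 3).coeff n := by
      rw [pow_three]
      exact coeff_mul_nonneg _ _ ih (coeff_mul_nonneg _ _ ih ih)
    rw [ternaryApprox, Polynomial.coeff_add, Polynomial.coeff_one]
    cases n with
    | zero => simp
    | succ n => simpa using h3 n

lemma approx_eval_bounds (m : ℕ) :
    0 ≤ (ternaryApprox m).eval (4 / 27) ∧ (ternaryApprox m).eval (4 / 27) ≤ 3 / 2 := by
  induction m with
  | zero => norm_num [ternaryApprox]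
  | succ m ih =>
    simp only [ternaryApprox, Polynomial.eval_add, Polynomial.eval_one, Polynomial.eval_mul,
      Polynomial.eval_X, Polynomial.eval_pow]
    have h3 := pow_le_pow_left₀ ih.1 ih.2 3
    have h0 := pow_nonneg ih.1 3
    constructor <;> linarith

lemma summable_fuss : Summable fun n => fuss n * (4 / 27 : ℝ) ^ n := by
  refine summable_of_sum_range_le (c := 3 / 2)
    (fun n => mul_nonneg (fuss_nonneg n) (by positivity)) fun N => ?_
  refine le_trans ?_ (approx_eval_bounds N).2
  rw [Polynomial.eval_eq_sum_range' (n := N + ((ternaryApprox N).natDegree + 1)) (by omega)]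
  calc ∑ i ∈ Finset.range N, fuss i * (4 / 27 : ℝ) ^ i
      = ∑ i ∈ Finset.range N, (ternaryApprox N).coeff i * (4 / 27 : ℝ) ^ i :=
        Finset.sum_congr rfl fun i hi => by
          rw [← coeff_eq_fuss, coeff_ternarySeries (Finset.mem_range.1 hi)]
    _ ≤ _ := Finset.sum_le_sum_of_subset_of_nonneg
        (Finset.range_mono (Nat.le_add_right _ _))
        fun i _ _ => mul_nonneg (approx_coeff_nonneg N i) (by positivity)

/-- Cauchy products of absolutely convergent evaluations of formal power series. -/
lemma eval_mul_of_summable (f g : PowerSeries ℝ) (r : ℝ)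
    (hf : Summable fun n => ‖PowerSeries.coeff n f * r ^ n‖)
    (hg : Summable fun n => ‖PowerSeries.coeff n g * r ^ n‖) :
    (Summable fun n => ‖PowerSeries.coeff n (f * g) * r ^ n‖) ∧
      ∑' n, PowerSeries.coeff n (f * g) * r ^ n
        = (∑' n, PowerSeries.coeff n f * r ^ n) * ∑' n, PowerSeries.coeff n g * r ^ n := by
  have h (n : ℕ) : PowerSeries.coeff n (f * g) * r ^ n
      = ∑ kl ∈ Finset.HasAntidiagonal.antidiagonal n, (PowerSeries.coeff kl.1 f * r ^ kl.1)
        * (PowerSeries.coeff kl.2 g * r ^ kl.2) := by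
    rw [PowerSeries.coeff_mul, Finset.sum_mul]
    refine Finset.sum_congr rfl fun kl hkl => ?_
    rw [← Finset.HasAntidiagonal.mem_antidiagonal.1 hkl, pow_add]
    ring
  simp only [h]
  exact ⟨summable_norm_sum_mul_antidiagonal_of_summable_norm
      (f := fun n => PowerSeries.coeff n f * r ^ n) (g := fun n => PowerSeries.coeff n g * r ^ n)
      hf hg,
    (tsum_mul_tsum_eq_tsum_sum_antidiagonal_of_summable_norm
      (f := fun n => PowerSeries.coeff n f * r ^ n) (g := fun n => PowerSeries.coeff n g * r ^ n)
      hf hg).symm⟩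

lemma tsum_fuss : ∑' n, fuss n * (4 / 27 : ℝ) ^ n = 3 / 2 := by
  have hs : Summable fun n => ‖PowerSeries.coeff n ternarySeries * (4 / 27 : ℝ) ^ n‖ := by
    simp only [coeff_eq_fuss]
    exact summable_fuss.norm
  obtain ⟨hs2, e2⟩ := eval_mul_of_summable _ _ _ hs hs
  obtain ⟨-, e3⟩ := eval_mul_of_summable _ _ _ hs hs2
  rw [e2] at e3
  have hsplit := summable_fuss.tsum_eq_zero_add
  have hc (n : ℕ) : fuss (n + 1) * (4 / 27 : ℝ) ^ (n + 1) = 4 / 27 *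
      (PowerSeries.coeff n (ternarySeries * (ternarySeries * ternarySeries))
        * (4 / 27 : ℝ) ^ n) := by
    have : fuss (n + 1)
        = PowerSeries.coeff n (ternarySeries * (ternarySeries * ternarySeries)) := by
      rw [← coeff_eq_fuss, ternarySeries_eq, map_add, PowerSeries.coeff_succ_X_mul,
        PowerSeries.coeff_one, ← ternarySeries_eq, pow_three]
      simp
    rw [this, pow_succ]
    ring
  simp only [hc] at hsplit
  rw [tsum_mul_left, e3] at hsplit
  simp only [coeff_eq_fuss] at hsplit
  have hpos : 0 ≤ ∑' n, fuss n * (4 / 27 : ℝ) ^ n :=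
    tsum_nonneg fun n => mul_nonneg (fuss_nonneg n) (by positivity)
  have h0 : fuss 0 = 1 := by simp [fuss]
  rw [h0] at hsplit
  generalize ∑' n, fuss n * (4 / 27 : ℝ) ^ n = S at hsplit hpos
  have hfac : (2 * S - 3) ^ 2 * (S + 3) = 0 := by linear_combination (-27) * hsplit
  have hz := (mul_eq_zero.1 hfac).resolve_right (by positivity)
  have := pow_eq_zero_iff (two_ne_zero) |>.1 hz
  linarith

/-- The series `∑_{k ≥ 1} k Z_k (2/9)^{k-1}` converges with sum `2`. -/
theorem Zp_deriv_series_sum :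
    HasSum (fun k : ℕ => ((k + 1 : ℕ) : ℝ) * Zp (k + 1) * (2 / 9 : ℝ) ^ k) (2 : ℝ) := by
  have h := summable_fuss.hasSum.mul_left (4 / 3 : ℝ)
  rw [tsum_fuss] at h
  have hterm (k : ℕ) : ((k + 1 : ℕ) : ℝ) * Zp (k + 1) * (2 / 9 : ℝ) ^ k
      = 4 / 3 * (fuss k * (4 / 27 : ℝ) ^ k) := by
    unfold Zp fuss
    rw [show 3 * (k + 1) - 3 = 3 * k by omega, show 2 * (k + 1) - 1 = 2 * k + 1 by omega,
      Nat.factorial_succ k, show (4 / 27 : ℝ) = 2 / 3 * (2 / 9) by norm_num, mul_pow, pow_succ]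
    have a := Nat.factorial_ne_zero k
    have b := Nat.factorial_ne_zero (2 * k + 1)
    push_cast
    field_simp
    ring
  simp only [hterm]
  rwa [show (4 / 3 * (3 / 2) : ℝ) = 2 by norm_num] at h
end

section
/- For every real $x$ with $0 < x \leq \frac{2}{9}$, the series $\sum_{k \geq 1} k \, Z_k \, x^{k-1}$ converges and its sum equals $4 \sqrt{\frac{2}{9x}} \, \sin\left(\frac{1}{3} \arcsin\left(\sqrt{\frac{9x}{2}}\right)\right)$. -/
/-!
Substituting `x = (2/9) sin² φ` with `0 < φ ≤ π/2`, the claim becomes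
`∑ b_k sin^(2k+1) φ = sin (φ/3)`, where `b_k = (1/3) (4/27)^k (3k)! / (k! (2k+1)!)`.

The recurrence `(2k+3)(2k+2) b_{k+1} = ((2k+1)² - 1/9) b_k` makes the equation `g'' + g/9 = 0`
telescope on the partial sums: `G_n(t) = ∑_{k<n} b_k sin^(2k+1) t` satisfies
`G_n'' + G_n/9 = -E_n` with the single term `E_n(t) = b_n (2n+1)(2n) sin^(2n-1) t`
(`hasDerivAt_partialSumDeriv`). Comparing with `sin ((φ-t)/3)` through a Wronskian gives
`|G_n(φ) - sin (φ/3)| ≤ 3 φ E_n(φ)` (`abs_partialSum_sub_le`), and the right side tends to `0` when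
`φ < π/2`, since `b_n` is bounded.

At `φ = π/2` the error bound is too weak, but all terms are nonnegative: the partial sums are
at most `sin (φ/3)` for `φ < π/2`, hence also at `π/2` by continuity, so the series converges there;
its sum dominates the sums at `φ < π/2`, so it is at least `sin (π/6)`.
-/

open Filter Topology

/-- The coefficients `(1/3) (4/27)^k (3k)! / (k! (2k+1)!)` of the expansion of `sin (φ/3)` in odd
powers of `sin φ`. -/
noncomputable def sinThirdCoeff (k : ℕ) : ℝ :=
  1 / 3 * (4 / 27) ^ k *
    ((Nat.factorial (3 * k) : ℝ) / ((Nat.factorial k : ℝ) * (Nat.factorial (2 * k + 1) : ℝ)))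

lemma sinThirdCoeff_zero : sinThirdCoeff 0 = 1 / 3 := by
  simp [sinThirdCoeff]

lemma sinThirdCoeff_nonneg (k : ℕ) : 0 ≤ sinThirdCoeff k := by
  unfold sinThirdCoeff; positivity

lemma sinThirdCoeff_succ (k : ℕ) :
    sinThirdCoeff (k + 1) * ((2 * k + 3) * (2 * k + 2)) =
      sinThirdCoeff k * ((2 * k + 1) ^ 2 - 1 / 9) := by
  unfold sinThirdCoeff
  have h1 : 3 * (k + 1) = 3 * k + 1 + 1 + 1 := by ring
  have h2 : 2 * (k + 1) + 1 = 2 * k + 1 + 1 + 1 := by ring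
  rw [h1, h2]
  simp only [Nat.factorial_succ (3 * k + 1 + 1), Nat.factorial_succ (3 * k + 1),
    Nat.factorial_succ (3 * k), Nat.factorial_succ k, Nat.factorial_succ (2 * k + 1 + 1),
    Nat.factorial_succ (2 * k + 1)]
  have e1 := Nat.factorial_ne_zero k
  have e2 := Nat.factorial_ne_zero (2 * k + 1)
  generalize Nat.factorial k = p at *
  generalize Nat.factorial (2 * k + 1) = q at *
  generalize Nat.factorial (3 * k) = r at *
  push_cast
  have e1' : (p : ℝ) ≠ 0 := by exact_mod_cast e1
  have e2' : (q : ℝ) ≠ 0 := by exact_mod_cast e2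
  have e3 : (k : ℝ) + 1 ≠ 0 := by positivity
  have e4 : (2 * k : ℝ) + 1 + 1 ≠ 0 := by positivity
  have e5 : (2 * k : ℝ) + 1 + 1 + 1 ≠ 0 := by positivity
  field_simp
  ring

lemma sinThirdCoeff_le (k : ℕ) : sinThirdCoeff k ≤ 1 / 3 := by
  induction k with
  | zero => exact sinThirdCoeff_zero.le
  | succ k ih =>
    have h := sinThirdCoeff_succ k
    have h0 := sinThirdCoeff_nonneg k
    have hk : (0 : ℝ) ≤ k := k.cast_nonneg
    have : sinThirdCoeff (k + 1) * ((2 * k + 3) * (2 * k + 2)) ≤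
        sinThirdCoeff k * ((2 * k + 3) * (2 * k + 2)) := by
      rw [h]
      apply mul_le_mul_of_nonneg_left _ h0
      nlinarith
    exact (le_of_mul_le_mul_right this (by positivity)).trans ih

/-- The partial sum `∑_{k<n} b_k sin^(2k+1) t`. -/
noncomputable def partialSum (n : ℕ) (t : ℝ) : ℝ :=
  ∑ k ∈ Finset.range n, sinThirdCoeff k * Real.sin t ^ (2 * k + 1)

/-- The derivative of `partialSum n`. -/
noncomputable def partialSumDeriv (n : ℕ) (t : ℝ) : ℝ :=
  ∑ k ∈ Finset.range n, sinThirdCoeff k * ((2 * k + 1) * Real.sin t ^ (2 * k) * Real.cos t)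

/-- The defect of `partialSum n` in the equation `g'' + g/9 = 0`. For `n = 0` the truncated exponent
`2n-1` is harmless, because the coefficient vanishes. -/
noncomputable def defect (n : ℕ) (t : ℝ) : ℝ :=
  sinThirdCoeff n * ((2 * n + 1) * (2 * n)) * Real.sin t ^ (2 * n - 1)

lemma hasDerivAt_partialSum (n : ℕ) (t : ℝ) :
    HasDerivAt (partialSum n) (partialSumDeriv n t) t := by
  unfold partialSum partialSumDeriv
  apply HasDerivAt.fun_sum
  intro k _
  have := ((Real.hasDerivAt_sin t).pow (2 * k + 1)).const_mul (sinThirdCoeff k)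
  simpa using this

lemma defect_succ (n : ℕ) (t : ℝ) :
    defect (n + 1) t = sinThirdCoeff n * ((2 * n + 1) ^ 2 - 1 / 9) * Real.sin t ^ (2 * n + 1) := by
  rw [← sinThirdCoeff_succ, defect]
  have : 2 * (n + 1) - 1 = 2 * n + 1 := by omega
  rw [this]
  push_cast
  ring

/-- The telescoping identity `G_n'' = -E_n - G_n/9`. -/
lemma hasDerivAt_partialSumDeriv (n : ℕ) (t : ℝ) :
    HasDerivAt (partialSumDeriv n) (-defect n t - partialSum n t / 9) t := by
  induction n with
  | zero =>
    have h : partialSumDeriv 0 = fun _ => 0 := by funext s; simp [partialSumDeriv]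
    rw [h]
    simpa [defect, partialSum] using hasDerivAt_const t (0 : ℝ)
  | succ n ih =>
    have h : partialSumDeriv (n + 1) = fun s => partialSumDeriv n s +
        sinThirdCoeff n * ((2 * n + 1) * Real.sin s ^ (2 * n) * Real.cos s) := by
      funext s; simp [partialSumDeriv, Finset.sum_range_succ]
    rw [h]
    have h2 := ih.add (((((Real.hasDerivAt_sin t).pow (2 * n)).const_mul
      (2 * (n : ℝ) + 1)).mul (Real.hasDerivAt_cos t)).const_mul (sinThirdCoeff n))
    refine h2.congr_deriv ?_
    have hG : partialSum (n + 1) t =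
        partialSum n t + sinThirdCoeff n * Real.sin t ^ (2 * n + 1) := by
      simp [partialSum, Finset.sum_range_succ]
    rw [defect_succ, hG, defect]
    have hc : Real.cos t * Real.cos t = 1 - Real.sin t ^ 2 := by
      rw [← Real.cos_sq']; ring
    rcases n with _ | m
    · simp; ring
    · have e1 : 2 * (m + 1) - 1 = 2 * m + 1 := by omega
      simp only [e1, Pi.pow_apply]
      push_cast
      linear_combination (sinThirdCoeff (m + 1) * (2 * (m + 1) + 1) * (2 * (m + 1)) *
        Real.sin t ^ (2 * m + 1)) * hc

lemma partialSum_zero (n : ℕ) : partialSum n 0 = 0 := by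
  simp [partialSum]

lemma partialSumDeriv_zero (n : ℕ) : partialSumDeriv (n + 1) 0 = 1 / 3 := by
  simp [partialSumDeriv, Finset.sum_range_succ', sinThirdCoeff_zero]

/-- Error bound from the Wronskian `W(t) = G_n'(t) sin((φ-t)/3) + G_n(t) cos((φ-t)/3)/3`, which
satisfies `W(0) = sin(φ/3)/3`, `W(φ) = G_n(φ)/3` and `W'(t) = -E_n(t) sin((φ-t)/3)`. -/
lemma abs_partialSum_sub_le (n : ℕ) {φ : ℝ} (h0 : 0 ≤ φ) (h1 : φ ≤ Real.pi / 2) :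
    |partialSum (n + 1) φ - Real.sin (φ / 3)| ≤ 3 * φ * defect (n + 1) φ := by
  have hW : ∀ t, HasDerivAt (fun t => partialSumDeriv (n + 1) t * Real.sin ((φ - t) / 3) +
      partialSum (n + 1) t * (Real.cos ((φ - t) / 3) / 3))
      (-defect (n + 1) t * Real.sin ((φ - t) / 3)) t := by
    intro t
    have hl : HasDerivAt (fun t : ℝ => (φ - t) / 3) (-1 / 3) t :=
      ((hasDerivAt_id t).const_sub φ).div_const 3
    have := ((hasDerivAt_partialSumDeriv (n + 1) t).mul hl.sin).add
      ((hasDerivAt_partialSum (n + 1) t).mul (hl.cos.div_const 3))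
    refine this.congr_deriv ?_
    ring
  have hb : ∀ t ∈ Set.Ico 0 φ, ‖-defect (n + 1) t * Real.sin ((φ - t) / 3)‖ ≤
      defect (n + 1) φ := by
    intro t ht
    have hpi := Real.pi_pos
    have hs0 : 0 ≤ Real.sin t :=
      Real.sin_nonneg_of_nonneg_of_le_pi ht.1 (by linarith [ht.2])
    have hs : Real.sin t ≤ Real.sin φ :=
      Real.sin_le_sin_of_le_of_le_pi_div_two (by linarith [ht.1]) h1 ht.2.le
    have hc := sinThirdCoeff_nonneg (n + 1)
    have hd0 : 0 ≤ defect (n + 1) t := by unfold defect; positivity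
    have hd : defect (n + 1) t ≤ defect (n + 1) φ := by unfold defect; gcongr
    rw [norm_mul, norm_neg, Real.norm_of_nonneg hd0, Real.norm_eq_abs]
    calc _ ≤ defect (n + 1) t * 1 := by gcongr; exact Real.abs_sin_le_one _
      _ ≤ _ := by linarith
  have := norm_image_sub_le_of_norm_deriv_le_segment' (fun t _ => (hW t).hasDerivWithinAt) hb φ
    (Set.right_mem_Icc.2 h0)
  simp only [partialSum_zero, partialSumDeriv_zero, sub_self, zero_div, Real.sin_zero,
    Real.cos_zero, sub_zero, Real.norm_eq_abs] at this
  rw [abs_le] at this ⊢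
  constructor <;> linarith [this.1, this.2]

lemma tendsto_defect {φ : ℝ} (h0 : 0 ≤ φ) (h1 : φ < Real.pi / 2) :
    Tendsto (fun n => defect (n + 1) φ) atTop (𝓝 0) := by
  have hpi := Real.pi_pos
  have hs0 : 0 ≤ Real.sin φ := Real.sin_nonneg_of_nonneg_of_le_pi h0 (by linarith)
  have hs1 : Real.sin φ < 1 := by
    rw [← Real.sin_pi_div_two]
    exact Real.sin_lt_sin_of_lt_of_le_pi_div_two (by linarith) le_rfl h1
  -- `E_{n+1}(φ) ≤ (2n+1)² s^(2n+1)` with `s = sin φ`, a subsequence of `m² s^m → 0`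
  have hlim : Tendsto (fun n : ℕ => ((2 * n + 1 : ℕ) : ℝ) ^ 2 * Real.sin φ ^ (2 * n + 1))
      atTop (𝓝 0) :=
    (tendsto_pow_const_mul_const_pow_of_lt_one 2 hs0 hs1).comp
      (tendsto_atTop_mono (fun n => show n ≤ 2 * n + 1 by omega) tendsto_id)
  refine squeeze_zero (fun n => ?_) (fun n => ?_) hlim
  · have := sinThirdCoeff_nonneg (n + 1)
    unfold defect; positivity
  · rw [defect_succ]
    push_cast
    have hp := pow_nonneg hs0 (2 * n + 1)
    have hc := sinThirdCoeff_le n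
    have hc0 := sinThirdCoeff_nonneg n
    gcongr
    nlinarith [sq_nonneg (2 * (n : ℝ) + 1)]

lemma hasSum_of_lt {φ : ℝ} (h0 : 0 ≤ φ) (h1 : φ < Real.pi / 2) :
    HasSum (fun k => sinThirdCoeff k * Real.sin φ ^ (2 * k + 1)) (Real.sin (φ / 3)) := by
  have hpi := Real.pi_pos
  have hs0 : 0 ≤ Real.sin φ := Real.sin_nonneg_of_nonneg_of_le_pi h0 (by linarith)
  rw [hasSum_iff_tendsto_nat_of_nonneg
    (fun k => mul_nonneg (sinThirdCoeff_nonneg k) (pow_nonneg hs0 _)), ← tendsto_add_atTop_iff_nat 1,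
    tendsto_iff_norm_sub_tendsto_zero]
  refine squeeze_zero (fun _ => norm_nonneg _) (fun n => abs_partialSum_sub_le n h0 h1.le) ?_
  simpa using (tendsto_defect h0 h1).const_mul (3 * φ)

lemma hasSum_pi_div_two :
    HasSum (fun k => sinThirdCoeff k * Real.sin (Real.pi / 2) ^ (2 * k + 1))
      (Real.sin (Real.pi / 2 / 3)) := by
  have hpi := Real.pi_pos
  have hnn : ∀ φ : ℝ, 0 ≤ φ → φ ≤ Real.pi / 2 →
      ∀ k, 0 ≤ sinThirdCoeff k * Real.sin φ ^ (2 * k + 1) := fun φ h0 h1 k =>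
    mul_nonneg (sinThirdCoeff_nonneg k)
      (pow_nonneg (Real.sin_nonneg_of_nonneg_of_le_pi h0 (by linarith)) _)
  have hmem : Set.Ioo 0 (Real.pi / 2) ∈ 𝓝[<] (Real.pi / 2) := Ioo_mem_nhdsLT (by linarith)
  have hf : Tendsto (fun φ : ℝ => Real.sin (φ / 3)) (𝓝[<] (Real.pi / 2))
      (𝓝 (Real.sin (Real.pi / 2 / 3))) :=
    (Continuous.tendsto (by fun_prop) _).mono_left nhdsWithin_le_nhds
  have hle : ∀ n, partialSum n (Real.pi / 2) ≤ Real.sin (Real.pi / 2 / 3) := by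
    intro n
    have hg : Tendsto (partialSum n) (𝓝[<] (Real.pi / 2)) (𝓝 (partialSum n (Real.pi / 2))) :=
      (hasDerivAt_partialSum n _).continuousAt.tendsto.mono_left nhdsWithin_le_nhds
    refine le_of_tendsto_of_tendsto hg hf ?_
    filter_upwards [hmem] with φ hφ
    exact sum_le_hasSum _ (fun k _ => hnn φ hφ.1.le hφ.2.le k) (hasSum_of_lt hφ.1.le hφ.2)
  have hsum := summable_of_sum_range_le (hnn (Real.pi / 2) (by linarith) le_rfl) hle
  rw [hsum.hasSum_iff]
  refine le_antisymm (hsum.tsum_le_of_sum_range_le hle) ?_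
  refine le_of_tendsto hf ?_
  filter_upwards [hmem] with φ hφ
  refine hasSum_le (fun k => ?_) (hasSum_of_lt hφ.1.le hφ.2) hsum.hasSum
  have hs0 : 0 ≤ Real.sin φ := Real.sin_nonneg_of_nonneg_of_le_pi hφ.1.le (by linarith [hφ.2])
  have hs : Real.sin φ ≤ Real.sin (Real.pi / 2) := by
    rw [Real.sin_pi_div_two]; exact Real.sin_le_one φ
  have := sinThirdCoeff_nonneg k
  gcongr

/-- For every real `0 < x ≤ 2/9`, the series `∑_{k ≥ 1} k Z_k x^{k-1}` converges with sum
`4 √(2/(9x)) sin((1/3) arcsin(√(9x/2)))`. -/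
theorem Zp_deriv_series_formula (x : ℝ) (hx0 : 0 < x) (hx : x ≤ 2 / 9) :
    HasSum (fun k : ℕ => ((k + 1 : ℕ) : ℝ) * Zp (k + 1) * x ^ k)
      (4 * Real.sqrt (2 / (9 * x)) *
        Real.sin ((1 / 3) * Real.arcsin (Real.sqrt (9 * x / 2)))) := by
  have hu2 : Real.sqrt (9 * x / 2) ^ 2 = 9 * x / 2 := Real.sq_sqrt (by positivity)
  have hu0 : 0 < Real.sqrt (9 * x / 2) := Real.sqrt_pos.2 (by positivity)
  have hu1 : Real.sqrt (9 * x / 2) ≤ 1 := Real.sqrt_le_one.2 (by linarith)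
  have hinv : Real.sqrt (2 / (9 * x)) = (Real.sqrt (9 * x / 2))⁻¹ := by
    rw [← Real.sqrt_inv, inv_div]
  rw [hinv]
  set u := Real.sqrt (9 * x / 2) with hu
  have hsin : Real.sin (Real.arcsin u) = u := Real.sin_arcsin (by linarith) hu1
  have hmain : HasSum (fun k => sinThirdCoeff k * u ^ (2 * k + 1))
      (Real.sin (Real.arcsin u / 3)) := by
    rcases (Real.arcsin_le_pi_div_two u).lt_or_eq with h | h
    · simpa [hsin] using hasSum_of_lt (Real.arcsin_nonneg.2 hu0.le) h
    · have := hasSum_pi_div_two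
      rwa [← h, hsin] at this
  rw [one_div_mul_eq_div]
  have hterm : ∀ k : ℕ, ((k + 1 : ℕ) : ℝ) * Zp (k + 1) * x ^ k =
      4 * u⁻¹ * (sinThirdCoeff k * u ^ (2 * k + 1)) := by
    intro k
    have hxu : x = 2 / 9 * u ^ 2 := by rw [hu2]; ring
    have e1 : 3 * (k + 1) - 3 = 3 * k := by omega
    have e2 : 2 * (k + 1) - 1 = 2 * k + 1 := by omega
    have e3 : (4 / 27 : ℝ) ^ k = (2 / 3) ^ k * (2 / 9) ^ k := by rw [← mul_pow]; norm_num
    rw [Zp, sinThirdCoeff, e1, e2, e3, Nat.factorial_succ k]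
    have hxk : x ^ k = (2 / 9) ^ k * u ^ (2 * k) := by rw [hxu, mul_pow, ← pow_mul]
    rw [hxk, pow_succ u, pow_succ (2 / 3 : ℝ)]
    have f1 : (Nat.factorial k : ℝ) ≠ 0 := by exact_mod_cast Nat.factorial_ne_zero k
    have f2 : (Nat.factorial (2 * k + 1) : ℝ) ≠ 0 := by
      exact_mod_cast Nat.factorial_ne_zero (2 * k + 1)
    have f3 : (k : ℝ) + 1 ≠ 0 := by positivity
    push_cast
    generalize (2 / 3 : ℝ) ^ k = A
    generalize (2 / 9 : ℝ) ^ k = B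
    field_simp
    ring
  rw [funext hterm]
  exact hmain.mul_left (4 * u⁻¹)
end
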